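/- arXiv:2512.17265 — 2 statements merged into one kernel-verified Lean document; each statement's English description precedes it below -/
import Mathlib

section
/- Under the hypotheses of the policy-transfer setting with greedy action mapping g (finite MDPs M₁, M₂ with GBSM d^{1-2}; deterministic policy π on M₁; f : S₂ → S₁; g satisfying δ(d^{1-2})((f(s'),a),(s',g(a))) = min_{a'∈A₂} δ(d^{1-2})((f(s'),a),(s',a')) for all s', a; V₂*, V₂^π, V₁*, V₁^π satisfying their Bellman equations), suppose additionally that f is chosen optimally: d^{1-2}(f(s'),s') = min_{s∈S₁} d^{1-2}(s,s') for all s' ∈ S₂. Then max_{s'∈S₂} |V₂*(s') − V₂^π(s')| ≤ (2/(1−γ))·max_{s'∈S₂} { min_{s∈S₁} d^{1-2}(s,s') } + ((1+γ)/(1−γ))·max_{s∈S₁} |V₁*(s) − V₁^π(s)|. -/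
open scoped BigOperators

noncomputable section

/-- The (finite, linear-programming) 1-Wasserstein distance between probability
vectors `P` on `S₁` and `Q` on `S₂` with cost function `d`. -/
def W1 {S₁ S₂ : Type*} [Fintype S₁] [Fintype S₂]
    (P : S₁ → ℝ) (Q : S₂ → ℝ) (d : S₁ → S₂ → ℝ) : ℝ :=
  sInf { c : ℝ | ∃ lam : S₁ → S₂ → ℝ,
    (∀ i j, 0 ≤ lam i j) ∧ (∀ i, ∑ j, lam i j = P i) ∧
    (∀ j, ∑ i, lam i j = Q j) ∧ c = ∑ i, ∑ j, lam i j * d i j }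

/-- A finite Markov decision process (without its discount factor). -/
structure FinMDP (S A : Type*) [Fintype S] [Fintype A] where
  P : S → A → S → ℝ
  R : S → A → ℝ
  P_nonneg : ∀ s a s', 0 ≤ P s a s'
  P_sum : ∀ s a, ∑ s', P s a s' = 1

variable {S₁ A₁ S₂ A₂ : Type*} [Fintype S₁] [Fintype A₁] [Fintype S₂] [Fintype A₂]

/-- `δ(d)((s,a),(s',a')) = |R₁(s,a) − R₂(s',a')| + γ·W₁(P₁(·|s,a), P₂(·|s',a'); d)` -/
def gbsmDelta (M₁ : FinMDP S₁ A₁) (M₂ : FinMDP S₂ A₂) (γ : ℝ)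
    (d : S₁ → S₂ → ℝ) (s : S₁) (a : A₁) (s' : S₂) (a' : A₂) : ℝ :=
  |M₁.R s a - M₂.R s' a'| + γ * W1 (M₁.P s a) (M₂.P s' a') d

/-- The GBSM operator `F(d)(s,s') = H(X_s, X_{s'}; δ(d))` where `H` is the Hausdorff
metric between the finite sets `X_s = {(s,a)}`, `X_{s'} = {(s',a')}`. -/
def gbsmF (M₁ : FinMDP S₁ A₁) (M₂ : FinMDP S₂ A₂) (γ : ℝ)
    (d : S₁ → S₂ → ℝ) : S₁ → S₂ → ℝ :=
  fun s s' =>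
    max (⨆ a : A₁, ⨅ a' : A₂, gbsmDelta M₁ M₂ γ d s a s' a')
        (⨅ a : A₁, ⨆ a' : A₂, gbsmDelta M₁ M₂ γ d s a s' a')

/-- The GBSM: pointwise supremum of the iterates of `gbsmF` from the zero function. -/
def gbsm (M₁ : FinMDP S₁ A₁) (M₂ : FinMDP S₂ A₂) (γ : ℝ) : S₁ → S₂ → ℝ :=
  fun s s' => ⨆ n : ℕ, (gbsmF M₁ M₂ γ)^[n] (fun _ _ => 0) s s'


section Helpers

theorem W1_nonneg' {S₁ S₂ : Type*} [Fintype S₁] [Fintype S₂]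
    (P : S₁ → ℝ) (Q : S₂ → ℝ) (d : S₁ → S₂ → ℝ) (hd : ∀ i j, 0 ≤ d i j) : 0 ≤ W1 P Q d := by
  apply Real.sInf_nonneg
  rintro c ⟨lam, h0, -, -, rfl⟩
  exact Finset.sum_nonneg fun i _ => Finset.sum_nonneg fun j _ => mul_nonneg (h0 i j) (hd i j)

theorem coupling_nonempty' {S₁ S₂ : Type*} [Fintype S₁] [Fintype S₂]
    (P : S₁ → ℝ) (Q : S₂ → ℝ) (d : S₁ → S₂ → ℝ) (hP : ∀ i, 0 ≤ P i) (hQ : ∀ i, 0 ≤ Q i)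
    (hP1 : ∑ i, P i = 1) (hQ1 : ∑ i, Q i = 1) :
    { c : ℝ | ∃ lam : S₁ → S₂ → ℝ,
    (∀ i j, 0 ≤ lam i j) ∧ (∀ i, ∑ j, lam i j = P i) ∧
    (∀ j, ∑ i, lam i j = Q j) ∧ c = ∑ i, ∑ j, lam i j * d i j }.Nonempty := by
  refine ⟨_, fun i j => P i * Q j, fun i j => mul_nonneg (hP i) (hQ j), ?_, ?_, rfl⟩
  · intro i; rw [← Finset.mul_sum, hQ1, mul_one]
  · intro j; rw [← Finset.sum_mul, hP1, one_mul]

theorem W1_shift' {S₁ S₂ : Type*} [Fintype S₁] [Fintype S₂]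
    (P : S₁ → ℝ) (Q : S₂ → ℝ) (d d' : S₁ → S₂ → ℝ) (e : ℝ)
    (hP : ∀ i, 0 ≤ P i) (hQ : ∀ i, 0 ≤ Q i)
    (hP1 : ∑ i, P i = 1) (hQ1 : ∑ i, Q i = 1) (hd : ∀ i j, 0 ≤ d i j)
    (h : ∀ i j, d i j ≤ d' i j + e) : W1 P Q d ≤ W1 P Q d' + e := by
  rw [← sub_le_iff_le_add]
  apply le_csInf (coupling_nonempty' P Q d' hP hQ hP1 hQ1)
  rintro c ⟨lam, h0, h1, h2, rfl⟩
  rw [sub_le_iff_le_add]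
  have : W1 P Q d ≤ ∑ i, ∑ j, lam i j * d i j := by
    apply csInf_le
    · refine ⟨0, ?_⟩
      rintro c ⟨lam, h0, -, -, rfl⟩
      exact Finset.sum_nonneg fun i _ => Finset.sum_nonneg fun j _ => mul_nonneg (h0 i j) (hd i j)
    · exact ⟨lam, h0, h1, h2, rfl⟩
  refine this.trans ?_
  calc ∑ i, ∑ j, lam i j * d i j ≤ ∑ i, ∑ j, (lam i j * d' i j + lam i j * e) := by
        gcongr with i _ j _
        rw [← mul_add]
        exact mul_le_mul_of_nonneg_left (h i j) (h0 i j)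
    _ = ∑ i, ∑ j, lam i j * d' i j + e := by
        simp only [Finset.sum_add_distrib, ← Finset.sum_mul, h1, hP1, one_mul]

theorem W1_dual' {S₁ S₂ : Type*} [Fintype S₁] [Fintype S₂]
    (P : S₁ → ℝ) (Q : S₂ → ℝ) (d : S₁ → S₂ → ℝ) (e : ℝ) (u : S₁ → ℝ) (v : S₂ → ℝ)
    (hP : ∀ i, 0 ≤ P i) (hQ : ∀ i, 0 ≤ Q i)
    (hP1 : ∑ i, P i = 1) (hQ1 : ∑ i, Q i = 1)
    (h : ∀ i j, |u i - v j| ≤ d i j + e) :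
    |∑ i, P i * u i - ∑ j, Q j * v j| ≤ W1 P Q d + e := by
  rw [← sub_le_iff_le_add]
  apply le_csInf (coupling_nonempty' P Q d hP hQ hP1 hQ1)
  rintro c ⟨lam, h0, h1, h2, rfl⟩
  rw [sub_le_iff_le_add]
  have e1 : ∑ i, P i * u i - ∑ j, Q j * v j = ∑ i, ∑ j, lam i j * (u i - v j) := by
    simp only [mul_sub, Finset.sum_sub_distrib, ← Finset.sum_mul, h1]
    congr 1
    rw [Finset.sum_comm]
    simp only [← Finset.sum_mul, h2]
  rw [e1]
  calc |∑ i, ∑ j, lam i j * (u i - v j)| ≤ ∑ i, ∑ j, |lam i j * (u i - v j)| :=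
        (Finset.abs_sum_le_sum_abs _ _).trans
          (Finset.sum_le_sum fun i _ => Finset.abs_sum_le_sum_abs _ _)
    _ ≤ ∑ i, ∑ j, (lam i j * d i j + lam i j * e) := by
        gcongr with i _ j _
        rw [← mul_add, abs_mul, abs_of_nonneg (h0 i j)]
        exact mul_le_mul_of_nonneg_left (h i j) (h0 i j)
    _ = ∑ i, ∑ j, lam i j * d i j + e := by
        simp only [Finset.sum_add_distrib, ← Finset.sum_mul, h1, hP1, one_mul]

theorem le_sup' {ι : Type*} [Finite ι] (x : ι → ℝ) (i : ι) : x i ≤ ⨆ i, x i :=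
  le_ciSup (Set.finite_range x).bddAbove i

theorem inf_le'' {ι : Type*} [Finite ι] (x : ι → ℝ) (i : ι) : ⨅ i, x i ≤ x i :=
  ciInf_le (Set.finite_range x).bddBelow i

theorem H_shift' {A B : Type*} [Finite A] [Finite B] [Nonempty A] [Nonempty B]
    (x y : A → B → ℝ) (e : ℝ) (h : ∀ a b, x a b ≤ y a b + e) :
    max (⨆ a, ⨅ b, x a b) (⨅ a, ⨆ b, x a b) ≤
      max (⨆ a, ⨅ b, y a b) (⨅ a, ⨆ b, y a b) + e := by
  apply max_le
  · refine le_trans ?_ (add_le_add_left (le_max_left _ _) e)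
    apply ciSup_le
    intro a
    refine le_trans ?_ (add_le_add_left (le_sup' (fun a => ⨅ b, y a b) a) e)
    rw [← sub_le_iff_le_add]
    apply le_ciInf
    intro b
    rw [sub_le_iff_le_add]
    exact (inf_le'' _ b).trans (h a b)
  · refine le_trans ?_ (add_le_add_left (le_max_right _ _) e)
    rw [← sub_le_iff_le_add]
    apply le_ciInf
    intro a
    rw [sub_le_iff_le_add]
    refine (inf_le'' _ a).trans ?_
    apply ciSup_le
    intro b
    exact (h a b).trans (add_le_add_left (le_sup' (fun b => y a b) b) e)

theorem delta_shift' (M₁ : FinMDP S₁ A₁) (M₂ : FinMDP S₂ A₂) (γ : ℝ) (hγ0 : 0 ≤ γ)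
    (d d' : S₁ → S₂ → ℝ) (e : ℝ) (hd : ∀ i j, 0 ≤ d i j)
    (h : ∀ i j, d i j ≤ d' i j + e) (s : S₁) (a : A₁) (s' : S₂) (a' : A₂) :
    gbsmDelta M₁ M₂ γ d s a s' a' ≤ gbsmDelta M₁ M₂ γ d' s a s' a' + γ * e := by
  unfold gbsmDelta
  have := W1_shift' (M₁.P s a) (M₂.P s' a') d d' e (M₁.P_nonneg s a) (M₂.P_nonneg s' a')
    (M₁.P_sum s a) (M₂.P_sum s' a') hd h
  nlinarith [mul_le_mul_of_nonneg_left this hγ0]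

theorem F_shift' [Nonempty A₁] [Nonempty A₂]
    (M₁ : FinMDP S₁ A₁) (M₂ : FinMDP S₂ A₂) (γ : ℝ) (hγ0 : 0 ≤ γ)
    (d d' : S₁ → S₂ → ℝ) (e : ℝ) (hd : ∀ i j, 0 ≤ d i j)
    (h : ∀ i j, d i j ≤ d' i j + e) (s : S₁) (s' : S₂) :
    gbsmF M₁ M₂ γ d s s' ≤ gbsmF M₁ M₂ γ d' s s' + γ * e :=
  H_shift' _ _ _ fun a b => delta_shift' M₁ M₂ γ hγ0 d d' e hd h s a s' b

theorem F_nonneg' (M₁ : FinMDP S₁ A₁) (M₂ : FinMDP S₂ A₂) (γ : ℝ) (hγ0 : 0 ≤ γ)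
    (d : S₁ → S₂ → ℝ) (hd : ∀ i j, 0 ≤ d i j) (s : S₁) (s' : S₂) :
    0 ≤ gbsmF M₁ M₂ γ d s s' := by
  refine le_trans ?_ (le_max_left _ _)
  apply Real.iSup_nonneg
  intro a
  apply Real.iInf_nonneg
  intro b
  exact add_nonneg (abs_nonneg _) (mul_nonneg hγ0 (W1_nonneg' _ _ _ hd))

theorem iter_nonneg' (M₁ : FinMDP S₁ A₁) (M₂ : FinMDP S₂ A₂) (γ : ℝ) (hγ0 : 0 ≤ γ) (n : ℕ)
    (s : S₁) (s' : S₂) : 0 ≤ (gbsmF M₁ M₂ γ)^[n] (fun _ _ => 0) s s' := by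
  induction n generalizing s s' with
  | zero => simp
  | succ n ih =>
    rw [Function.iterate_succ_apply']
    exact F_nonneg' M₁ M₂ γ hγ0 _ ih s s'

theorem iter_mono' [Nonempty A₁] [Nonempty A₂]
    (M₁ : FinMDP S₁ A₁) (M₂ : FinMDP S₂ A₂) (γ : ℝ) (hγ0 : 0 ≤ γ) (n : ℕ)
    (s : S₁) (s' : S₂) : (gbsmF M₁ M₂ γ)^[n] (fun _ _ => 0) s s' ≤
      (gbsmF M₁ M₂ γ)^[n+1] (fun _ _ => 0) s s' := by
  induction n generalizing s s' with
  | zero => exact iter_nonneg' M₁ M₂ γ hγ0 1 s s'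
  | succ n ih =>
    rw [Function.iterate_succ_apply', Function.iterate_succ_apply' _ (n+1)]
    have := F_shift' M₁ M₂ γ hγ0 _ _ 0 (iter_nonneg' M₁ M₂ γ hγ0 n)
      (fun i j => by simpa using ih i j) s s'
    simpa using this

theorem iter_bdd' [Nonempty A₁] [Nonempty A₂]
    (M₁ : FinMDP S₁ A₁) (M₂ : FinMDP S₂ A₂) (γ Rbar : ℝ)
    (hγ0 : 0 ≤ γ) (hγ1 : γ < 1)
    (hR₁ : ∀ s a, 0 ≤ M₁.R s a ∧ M₁.R s a ≤ Rbar)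
    (hR₂ : ∀ s a, 0 ≤ M₂.R s a ∧ M₂.R s a ≤ Rbar) (hRbar : 0 < Rbar) (n : ℕ)
    (s : S₁) (s' : S₂) : (gbsmF M₁ M₂ γ)^[n] (fun _ _ => 0) s s' ≤ Rbar / (1 - γ) := by
  have h1 : 0 < 1 - γ := by linarith
  induction n generalizing s s' with
  | zero => simp; positivity
  | succ n ih =>
    rw [Function.iterate_succ_apply']
    have := F_shift' M₁ M₂ γ hγ0 _ (fun _ _ => 0) (Rbar / (1 - γ)) (iter_nonneg' M₁ M₂ γ hγ0 n)
      (fun i j => by simpa using ih i j) s s'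
    refine this.trans ?_
    have hδ : ∀ a b, gbsmDelta M₁ M₂ γ (fun _ _ => 0) s a s' b ≤ Rbar := by
      intro a b
      have hW : W1 (M₁.P s a) (M₂.P s' b) (fun _ _ => 0) ≤ 0 := by
        unfold W1
        apply csInf_le
        · refine ⟨0, ?_⟩
          rintro c ⟨lam, -, -, -, rfl⟩
          simp
        · obtain ⟨c, lam, h0, h1, h2, rfl⟩ := coupling_nonempty' (M₁.P s a) (M₂.P s' b)
            (fun _ _ => 0) (M₁.P_nonneg s a) (M₂.P_nonneg s' b) (M₁.P_sum s a) (M₂.P_sum s' b)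
          exact ⟨lam, h0, h1, h2, by simp⟩
      unfold gbsmDelta
      have h3 := mul_nonpos_of_nonneg_of_nonpos hγ0 hW
      have h4 : |M₁.R s a - M₂.R s' b| ≤ Rbar := by
        rw [abs_le]
        constructor <;> linarith [(hR₁ s a).1, (hR₁ s a).2, (hR₂ s' b).1, (hR₂ s' b).2]
      linarith
    have hF : gbsmF M₁ M₂ γ (fun _ _ => 0) s s' ≤ Rbar := by
      have h5 := H_shift' _ (fun (_ : A₁) (_ : A₂) => (0:ℝ)) Rbar (fun a b => by
        simpa using hδ a b)
      unfold gbsmF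
      simpa using h5
    have : Rbar + γ * (Rbar / (1 - γ)) = Rbar / (1 - γ) := by field_simp; ring
    linarith

theorem gbsm_bddAbove' [Nonempty A₁] [Nonempty A₂]
    (M₁ : FinMDP S₁ A₁) (M₂ : FinMDP S₂ A₂) (γ Rbar : ℝ)
    (hγ0 : 0 ≤ γ) (hγ1 : γ < 1)
    (hR₁ : ∀ s a, 0 ≤ M₁.R s a ∧ M₁.R s a ≤ Rbar)
    (hR₂ : ∀ s a, 0 ≤ M₂.R s a ∧ M₂.R s a ≤ Rbar) (hRbar : 0 < Rbar)
    (s : S₁) (s' : S₂) :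
    BddAbove (Set.range fun n : ℕ => (gbsmF M₁ M₂ γ)^[n] (fun _ _ => 0) s s') := by
  refine ⟨Rbar / (1 - γ), ?_⟩
  rintro _ ⟨n, rfl⟩
  exact iter_bdd' M₁ M₂ γ Rbar hγ0 hγ1 hR₁ hR₂ hRbar n s s'

theorem gbsm_nonneg' (M₁ : FinMDP S₁ A₁) (M₂ : FinMDP S₂ A₂) (γ : ℝ) (hγ0 : 0 ≤ γ)
    (s : S₁) (s' : S₂) : 0 ≤ gbsm M₁ M₂ γ s s' :=
  Real.iSup_nonneg fun n => iter_nonneg' M₁ M₂ γ hγ0 n s s'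

theorem F_gbsm_le' [Nonempty A₁] [Nonempty A₂]
    (M₁ : FinMDP S₁ A₁) (M₂ : FinMDP S₂ A₂) (γ Rbar : ℝ)
    (hγ0 : 0 ≤ γ) (hγ1 : γ < 1)
    (hR₁ : ∀ s a, 0 ≤ M₁.R s a ∧ M₁.R s a ≤ Rbar)
    (hR₂ : ∀ s a, 0 ≤ M₂.R s a ∧ M₂.R s a ≤ Rbar) (hRbar : 0 < Rbar)
    (s : S₁) (s' : S₂) : gbsmF M₁ M₂ γ (gbsm M₁ M₂ γ) s s' ≤ gbsm M₁ M₂ γ s s' := by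
  apply le_of_forall_pos_le_add
  intro ε hε
  have hb := gbsm_bddAbove' M₁ M₂ γ Rbar hγ0 hγ1 hR₁ hR₂ hRbar
  have hev : ∀ᶠ n : ℕ in Filter.atTop, ∀ i : S₁, ∀ j : S₂,
      gbsm M₁ M₂ γ i j ≤ (gbsmF M₁ M₂ γ)^[n] (fun _ _ => 0) i j + ε := by
    rw [Filter.eventually_all]
    intro i
    rw [Filter.eventually_all]
    intro j
    have ht := tendsto_atTop_ciSup
      (monotone_nat_of_le_succ fun n => iter_mono' M₁ M₂ γ hγ0 n i j) (hb i j)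
    have hlt : gbsm M₁ M₂ γ i j - ε < gbsm M₁ M₂ γ i j := by linarith
    filter_upwards [ht.eventually (lt_mem_nhds hlt)] with n hn
    linarith
  obtain ⟨n, hn⟩ := hev.exists
  have h1 := F_shift' M₁ M₂ γ hγ0 _ _ ε (gbsm_nonneg' M₁ M₂ γ hγ0) hn s s'
  have h2 := le_ciSup (hb s s') (n+1)
  simp only [Function.iterate_succ_apply'] at h2
  have h3 : γ * ε ≤ ε := by nlinarith
  unfold gbsm at h1 ⊢
  linarith

theorem value_le' [Nonempty S₁] [Nonempty A₁] [Nonempty S₂] [Nonempty A₂]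
    (M₁ : FinMDP S₁ A₁) (M₂ : FinMDP S₂ A₂) (γ : ℝ)
    (hγ0 : 0 ≤ γ) (hγ1 : γ < 1) (d : S₁ → S₂ → ℝ)
    (hF : ∀ s s', gbsmF M₁ M₂ γ d s s' ≤ d s s')
    (V₁star : S₁ → ℝ) (V₂star : S₂ → ℝ)
    (hV₁star : ∀ s, V₁star s = ⨆ a : A₁, (M₁.R s a + γ * ∑ t, M₁.P s a t * V₁star t))
    (hV₂star : ∀ s', V₂star s' = ⨆ a : A₂, (M₂.R s' a + γ * ∑ t, M₂.P s' a t * V₂star t))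
    (s : S₁) (s' : S₂) : |V₁star s - V₂star s'| ≤ d s s' := by
  obtain ⟨⟨p, q⟩, hm⟩ := Finite.exists_max
    (fun x : S₁ × S₂ => |V₁star x.1 - V₂star x.2| - d x.1 x.2)
  set K := |V₁star p - V₂star q| - d p q with hK
  have hm' : ∀ i j, |V₁star i - V₂star j| ≤ d i j + K := fun i j => by
    have := hm (i, j)
    simp only at this
    linarith
  have key : ∀ a b, |(M₁.R p a + γ * ∑ t, M₁.P p a t * V₁star t) -
      (M₂.R q b + γ * ∑ t, M₂.P q b t * V₂star t)| ≤ gbsmDelta M₁ M₂ γ d p a q b + γ * K := by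
    intro a b
    have h1 := W1_dual' (M₁.P p a) (M₂.P q b) d K V₁star V₂star (M₁.P_nonneg p a)
      (M₂.P_nonneg q b) (M₁.P_sum p a) (M₂.P_sum q b) hm'
    have h2 := mul_le_mul_of_nonneg_left h1 hγ0
    rw [← abs_of_nonneg hγ0, ← abs_mul, abs_of_nonneg hγ0] at h2
    have h3 := abs_add_le (M₁.R p a - M₂.R q b)
      (γ * (∑ i, M₁.P p a i * V₁star i - ∑ j, M₂.P q b j * V₂star j))
    unfold gbsmDelta
    calc _ = |(M₁.R p a - M₂.R q b) +
      γ * (∑ i, M₁.P p a i * V₁star i - ∑ j, M₂.P q b j * V₂star j)| := by congr 1; ring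
      _ ≤ _ := h3
      _ ≤ _ := by linarith
  have hle : |V₁star p - V₂star q| ≤ d p q + γ * K := by
    rw [abs_le]
    constructor
    · obtain ⟨a, ha⟩ := exists_eq_ciInf_of_finite
        (f := fun a : A₁ => ⨆ b : A₂, gbsmDelta M₁ M₂ γ d p a q b)
      have h5 : V₂star q ≤ V₁star p + (d p q + γ * K) := by
        rw [hV₂star q]
        apply ciSup_le
        intro b
        have h6 := abs_le.1 (key a b)
        have h7 : gbsmDelta M₁ M₂ γ d p a q b ≤ d p q := by
          refine (le_sup' (fun b => gbsmDelta M₁ M₂ γ d p a q b) b).trans ?_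
          rw [ha]
          exact (le_max_right _ _).trans (hF p q)
        have h8 := le_sup' (fun a : A₁ => (M₁.R p a + γ * ∑ t, M₁.P p a t * V₁star t)) a
        rw [← hV₁star p] at h8
        linarith [h6.1]
      linarith
    · have h5 : V₁star p ≤ V₂star q + (d p q + γ * K) := by
        rw [hV₁star p]
        apply ciSup_le
        intro a
        obtain ⟨b, hb⟩ := exists_eq_ciInf_of_finite
          (f := fun b : A₂ => gbsmDelta M₁ M₂ γ d p a q b)
        have h6 := abs_le.1 (key a b)
        have h7 : gbsmDelta M₁ M₂ γ d p a q b ≤ d p q := by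
          rw [hb]
          refine (le_sup' (fun a => ⨅ b, gbsmDelta M₁ M₂ γ d p a q b) a).trans ?_
          exact (le_max_left _ _).trans (hF p q)
        have h8 := le_sup' (fun a : A₂ => (M₂.R q a + γ * ∑ t, M₂.P q a t * V₂star t)) b
        rw [← hV₂star q] at h8
        linarith [h6.2]
      linarith
  have hK0 : K ≤ 0 := by nlinarith
  linarith [hm' s s']

theorem avg_le' {S : Type*} [Fintype S] (P u : S → ℝ) (E : ℝ) (hP : ∀ i, 0 ≤ P i)
    (hP1 : ∑ i, P i = 1) (h : ∀ i, u i ≤ E) : ∑ i, P i * u i ≤ E := by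
  calc ∑ i, P i * u i ≤ ∑ i, P i * E :=
        Finset.sum_le_sum fun i _ => mul_le_mul_of_nonneg_left (h i) (hP i)
    _ = E := by rw [← Finset.sum_mul, hP1, one_mul]

end Helpers

variable [Nonempty S₁] [Nonempty A₁] [Nonempty S₂] [Nonempty A₂]

/-- regret bound for policy transfer with greedy action mapping and
optimal state mapping. -/
theorem policy_transfer_regret_bound_optimal_state_mapping
    (M₁ : FinMDP S₁ A₁) (M₂ : FinMDP S₂ A₂) (γ Rbar : ℝ)
    (hγ0 : 0 ≤ γ) (hγ1 : γ < 1) (hRbar : 0 < Rbar)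
    (hR₁ : ∀ s a, 0 ≤ M₁.R s a ∧ M₁.R s a ≤ Rbar)
    (hR₂ : ∀ s a, 0 ≤ M₂.R s a ∧ M₂.R s a ≤ Rbar)
    (π : S₁ → A₁) (f : S₂ → S₁) (g : A₁ → A₂)
    (V₁star V₁pi : S₁ → ℝ) (V₂star V₂pi : S₂ → ℝ)
    (hV₁star : ∀ s, V₁star s = ⨆ a : A₁, (M₁.R s a + γ * ∑ t, M₁.P s a t * V₁star t))
    (hV₂star : ∀ s', V₂star s' = ⨆ a : A₂, (M₂.R s' a + γ * ∑ t, M₂.P s' a t * V₂star t))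
    (hV₁pi : ∀ s, V₁pi s = M₁.R s (π s) + γ * ∑ t, M₁.P s (π s) t * V₁pi t)
    (hV₂pi : ∀ s', V₂pi s' =
      M₂.R s' (g (π (f s'))) + γ * ∑ t, M₂.P s' (g (π (f s'))) t * V₂pi t)
    (hg : ∀ (s' : S₂) (a : A₁),
      gbsmDelta M₁ M₂ γ (gbsm M₁ M₂ γ) (f s') a s' (g a) =
        ⨅ a' : A₂, gbsmDelta M₁ M₂ γ (gbsm M₁ M₂ γ) (f s') a s' a')
    (hf : ∀ s' : S₂, gbsm M₁ M₂ γ (f s') s' = ⨅ s : S₁, gbsm M₁ M₂ γ s s') :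
    (⨆ s' : S₂, |V₂star s' - V₂pi s'|) ≤
      2 / (1 - γ) * (⨆ s' : S₂, ⨅ s : S₁, gbsm M₁ M₂ γ s s') +
        (1 + γ) / (1 - γ) * ⨆ s : S₁, |V₁star s - V₁pi s| := by
  have hF := F_gbsm_le' M₁ M₂ γ Rbar hγ0 hγ1 hR₁ hR₂ hRbar
  set d := gbsm M₁ M₂ γ with hd
  have hval := value_le' M₁ M₂ γ hγ0 hγ1 d hF V₁star V₂star hV₁star hV₂star
  set D := ⨆ s' : S₂, ⨅ s : S₁, d s s' with hD
  set E := ⨆ s : S₁, |V₁star s - V₁pi s| with hE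
  set X := ⨆ s' : S₂, |V₂star s' - V₂pi s'| with hX
  have hDle : ∀ s', d (f s') s' ≤ D := fun s' => by
    rw [hf]; exact le_sup' (fun s' => ⨅ s : S₁, d s s') s'
  have hEle : ∀ s, |V₁star s - V₁pi s| ≤ E := le_sup' (fun s => |V₁star s - V₁pi s|)
  have hXle : ∀ s, |V₂star s - V₂pi s| ≤ X := le_sup' (fun s => |V₂star s - V₂pi s|)
  have hmain : X ≤ 2 * D + (1 + γ) * E + γ * X := by
    apply ciSup_le
    intro s'
    have hδ : gbsmDelta M₁ M₂ γ d (f s') (π (f s')) s' (g (π (f s'))) ≤ D := by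
      rw [hg]
      refine (le_sup' (fun a => ⨅ b, gbsmDelta M₁ M₂ γ d (f s') a s' b) (π (f s'))).trans ?_
      exact (le_max_left _ _).trans ((hF (f s') s').trans (hDle s'))
    generalize hb : g (π (f s')) = b at hδ
    have h2 := hV₂pi s'
    rw [hb] at h2
    have h1 := hV₁pi (f s')
    have hv := (hval (f s') s').trans (hDle s')
    have hw := W1_dual' (M₁.P (f s') (π (f s'))) (M₂.P s' b) d 0 V₁star V₂star
      (M₁.P_nonneg _ _) (M₂.P_nonneg _ _) (M₁.P_sum _ _) (M₂.P_sum _ _)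
      (fun i j => by simpa using hval i j)
    have a1 := avg_le' _ (fun t => V₁star t - V₁pi t) E (M₁.P_nonneg (f s') (π (f s')))
      (M₁.P_sum _ _) (fun t => (abs_le.1 (hEle t)).2)
    have a2 := avg_le' _ (fun t => V₁pi t - V₁star t) E (M₁.P_nonneg (f s') (π (f s')))
      (M₁.P_sum _ _) (fun t => by linarith [(abs_le.1 (hEle t)).1])
    have a3 := avg_le' _ (fun t => V₂star t - V₂pi t) X (M₂.P_nonneg s' b)
      (M₂.P_sum _ _) (fun t => (abs_le.1 (hXle t)).2)
    have a4 := avg_le' _ (fun t => V₂pi t - V₂star t) X (M₂.P_nonneg s' b)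
      (M₂.P_sum _ _) (fun t => by linarith [(abs_le.1 (hXle t)).1])
    simp only [mul_sub, Finset.sum_sub_distrib] at a1 a2 a3 a4
    have hE1 := abs_le.1 (hEle (f s'))
    have hv1 := abs_le.1 hv
    have hw1 := abs_le.1 hw
    unfold gbsmDelta at hδ
    have hr1 := le_abs_self (M₁.R (f s') (π (f s')) - M₂.R s' b)
    have hr2 := neg_abs_le (M₁.R (f s') (π (f s')) - M₂.R s' b)
    have b1 := mul_le_mul_of_nonneg_left a1 hγ0
    have b2 := mul_le_mul_of_nonneg_left a2 hγ0
    have b3 := mul_le_mul_of_nonneg_left a3 hγ0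
    have b4 := mul_le_mul_of_nonneg_left a4 hγ0
    have c1 := mul_le_mul_of_nonneg_left hw1.1 hγ0
    have c2 := mul_le_mul_of_nonneg_left hw1.2 hγ0
    rw [abs_le]
    constructor <;> linarith [hE1.1, hE1.2, hv1.1, hv1.2]
  have hpos : 0 < 1 - γ := by linarith
  have : 2 / (1 - γ) * D + (1 + γ) / (1 - γ) * E = (2 * D + (1 + γ) * E) / (1 - γ) := by
    field_simp
  rw [this, le_div_iff₀ hpos]
  linarith


end
end

section
/- Let P be a probability vector on a nonempty finite set S₁ and Q a probability vector on a nonempty finite set S₂. Let (ρ_n) be a pointwise nondecreasing sequence of cost functions S₁ × S₂ → ℝ, uniformly bounded above, with pointwise supremum ρ(i,j) = sup_n ρ_n(i,j). Then W₁(P,Q;ρ) = sup_n W₁(P,Q;ρ_n). -/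
open scoped BigOperators

noncomputable section

theorem W1_le_add {S₁ S₂ : Type*} [Fintype S₁] [Fintype S₂]
    (P : S₁ → ℝ) (Q : S₂ → ℝ)
    (hP0 : ∀ i, 0 ≤ P i) (hP1 : ∑ i, P i = 1)
    (hQ0 : ∀ j, 0 ≤ Q j) (hQ1 : ∑ j, Q j = 1)
    (d d' : S₁ → S₂ → ℝ) (ε : ℝ) (h : ∀ i j, d i j ≤ d' i j + ε) :
    W1 P Q d ≤ W1 P Q d' + ε := by
  have key : ∀ (a b : S₁ → S₂ → ℝ) (e : ℝ), (∀ i j, a i j ≤ b i j + e) →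
      ∀ lam : S₁ → S₂ → ℝ, (∀ i j, 0 ≤ lam i j) → (∀ i, ∑ j, lam i j = P i) →
      ∑ i, ∑ j, lam i j * a i j ≤ (∑ i, ∑ j, lam i j * b i j) + e := by
    intro a b e hab lam h0 h1
    have h2 : (∑ i, ∑ j, lam i j * b i j) + e = ∑ i, ∑ j, lam i j * (b i j + e) := by
      simp only [mul_add, Finset.sum_add_distrib, ← Finset.sum_mul, h1, hP1, one_mul]
    rw [h2]
    exact Finset.sum_le_sum fun i _ => Finset.sum_le_sum fun j _ =>
      mul_le_mul_of_nonneg_left (hab i j) (h0 i j)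
  rw [← sub_le_iff_le_add]
  refine le_csInf ⟨_, fun i j => P i * Q j, fun i j => mul_nonneg (hP0 i) (hQ0 j), ?_, ?_, rfl⟩ ?_
  · intro i
    rw [← Finset.mul_sum, hQ1, mul_one]
  · intro j
    rw [← Finset.sum_mul, hP1, one_mul]
  · rintro c ⟨lam, h0, h1, h2, rfl⟩
    rw [sub_le_iff_le_add]
    refine le_trans (csInf_le ?_ ⟨lam, h0, h1, h2, rfl⟩) (key d d' ε h lam h0 h1)
    refine ⟨-∑ i, ∑ j, |d i j|, ?_⟩
    rintro c ⟨l, g0, g1, g2, rfl⟩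
    have := key (fun _ _ => 0) d (∑ i, ∑ j, |d i j|) (fun i j => by
      have a1 : |d i j| ≤ ∑ j, |d i j| :=
        Finset.single_le_sum (f := fun j => |d i j|) (fun _ _ => abs_nonneg _) (Finset.mem_univ j)
      have a2 : ∑ j, |d i j| ≤ ∑ i, ∑ j, |d i j| :=
        Finset.single_le_sum (f := fun i => ∑ j, |d i j|)
          (fun _ _ => Finset.sum_nonneg fun _ _ => abs_nonneg _) (Finset.mem_univ i)
      have := neg_abs_le (d i j)
      linarith) l g0 g1
    simp only [mul_zero, Finset.sum_const_zero] at this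
    linarith

/-- continuity of the Wasserstein distance along pointwise nondecreasing,
uniformly bounded sequences of cost functions. -/
theorem W1_iSup {S₁ S₂ : Type*} [Fintype S₁] [Nonempty S₁] [Fintype S₂] [Nonempty S₂]
    (P : S₁ → ℝ) (Q : S₂ → ℝ)
    (hP0 : ∀ i, 0 ≤ P i) (hP1 : ∑ i, P i = 1)
    (hQ0 : ∀ j, 0 ≤ Q j) (hQ1 : ∑ j, Q j = 1)
    (ρ : ℕ → S₁ → S₂ → ℝ)
    (hmono : ∀ i j, Monotone fun n => ρ n i j)
    (hbdd : ∃ C : ℝ, ∀ n i j, ρ n i j ≤ C) :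
    W1 P Q (fun i j => ⨆ n : ℕ, ρ n i j) = ⨆ n : ℕ, W1 P Q (ρ n) := by
  obtain ⟨C, hC⟩ := hbdd
  have hb : ∀ i j, BddAbove (Set.range fun n => ρ n i j) := fun i j =>
    ⟨C, by rintro _ ⟨n, rfl⟩; exact hC n i j⟩
  have hle : ∀ n, W1 P Q (ρ n) ≤ W1 P Q (fun i j => ⨆ n : ℕ, ρ n i j) := fun n => by
    have := W1_le_add P Q hP0 hP1 hQ0 hQ1 (ρ n) (fun i j => ⨆ n : ℕ, ρ n i j) 0
      (fun i j => by rw [add_zero]; exact le_ciSup (hb i j) n)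
    rwa [add_zero] at this
  refine le_antisymm (le_of_forall_pos_le_add fun ε hε => ?_) (ciSup_le hle)
  have hev : ∀ᶠ n in Filter.atTop, ∀ i j, (⨆ n : ℕ, ρ n i j) ≤ ρ n i j + ε := by
    rw [Filter.eventually_all]
    intro i
    rw [Filter.eventually_all]
    intro j
    filter_upwards [(tendsto_atTop_ciSup (hmono i j) (hb i j)).eventually
      (lt_mem_nhds (sub_lt_self _ hε))] with n hn
    linarith
  obtain ⟨n, hn⟩ := hev.exists
  have h1 := W1_le_add P Q hP0 hP1 hQ0 hQ1 _ (ρ n) ε hn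
  have h2 : W1 P Q (ρ n) ≤ ⨆ n : ℕ, W1 P Q (ρ n) :=
    le_ciSup (f := fun n => W1 P Q (ρ n)) ⟨_, by rintro _ ⟨n, rfl⟩; exact hle n⟩ n
  linarith

end
end
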